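/- arXiv:1303.3323 — 3 statements merged into one kernel-verified Lean document; each statement's English description precedes it below -/
import Mathlib

section
/- Let the alphabet Fin k be partitioned by a predicate P : Fin k → Bool into a set of k_v vowels (P true) and k_c consonants (P false), with k_v ≥ 1, k_c ≥ 1 and k = k_v + k_c, and let n ≥ 2. If n is even, or if n is odd and k_v = k_c, then there exists a U-cycle for the set of class-alternating words of length n over Fin k. -/
/-- A U-cycle for a finite set `S` of `n`-letter words over the alphabet `Fin k`. -/
def IsUCycle {n k : ℕ} (S : Finset (Fin n → Fin k)) (s : ZMod S.card → Fin k) : Prop :=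
  Set.BijOn (fun i : ZMod S.card => fun j : Fin n => s (i + ((j : ℕ) : ZMod S.card)))
    Set.univ ↑S

/-- A word `w` of length `n` is class-alternating with respect to the vowel/consonant
classification `P` if consecutive letters always lie in different classes. -/
def ClassAlternating {n k : ℕ} (P : Fin k → Bool) (w : Fin n → Fin k) : Prop :=
  ∀ i j : Fin n, (j : ℕ) = (i : ℕ) + 1 → P (w i) ≠ P (w j)


instance {n k : ℕ} (P : Fin k → Bool) :
    DecidablePred (fun w : Fin n → Fin k => ClassAlternating P w) := fun w =>
  inferInstanceAs (Decidable (∀ i j : Fin n, (j : ℕ) = (i : ℕ) + 1 → P (w i) ≠ P (w j)))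

lemma euler_perm {W : Type*} [Fintype W] (F : W → W → Prop)
    (hrect : ∀ e g u v, F e v → F g v → F e u → F g u)
    (σ₀ : Equiv.Perm W) (h0 : ∀ w, F w (σ₀ w))
    (hconn : ∀ A : Set W, A.Nonempty → (∀ w ∈ A, ∀ v, F w v → v ∈ A) → A = Set.univ) :
    ∃ σ : Equiv.Perm W, (∀ w, F w (σ w)) ∧ ∀ x y, σ.SameCycle x y := by
  classical
  obtain ⟨σ, hσ, hmax⟩ := Finset.exists_max_image
    (Finset.univ.filter (fun σ : Equiv.Perm W => ∀ w, F w (σ w)))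
    (fun σ => (Finset.univ.filter (fun p : W × W => σ.SameCycle p.1 p.2)).card)
    ⟨σ₀, by simpa using h0⟩
  simp only [Finset.mem_filter, Finset.mem_univ, true_and] at hσ hmax
  refine ⟨σ, hσ, ?_⟩
  intro x
  have key : {y | σ.SameCycle x y} = Set.univ := by
    apply hconn _ ⟨x, Equiv.Perm.SameCycle.refl _ _⟩
    intro e he f hef
    by_contra hf
    simp only [Set.mem_ofPred_eq] at he hf
    -- merge the two cycles
    obtain ⟨g, rfl⟩ := σ.surjective f
    have heg : ¬ σ.SameCycle e g := by
      intro h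
      exact hf ((he.trans h).trans ⟨1, by simp⟩)
    have hne : e ≠ g := by
      rintro rfl
      exact heg (Equiv.Perm.SameCycle.refl _ _)
    set τ : Equiv.Perm W := σ * Equiv.swap e g with hτ
    have τe : τ e = σ g := by simp [hτ]
    have τg : τ g = σ e := by simp [hτ]
    have τo : ∀ z, z ≠ e → z ≠ g → τ z = σ z := by
      intro z h1 h2
      simp [hτ, Equiv.swap_apply_of_ne_of_ne h1 h2]
    have hτF : ∀ w, F w (τ w) := by
      intro w
      by_cases h1 : w = e
      · subst h1; rw [τe]; exact hef
      by_cases h2 : w = g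
      · subst h2; rw [τg]; exact hrect e w _ _ hef (hσ w) (hσ e)
      rw [τo w h1 h2]; exact hσ w
    have hstep : ∀ z, τ.SameCycle z (τ z) := fun z => ⟨1, by simp⟩
    have back : ∀ (j : ℕ) (z : W), (σ ^ j) z = g → τ.SameCycle z g := by
      intro j
      induction j with
      | zero => intro z hz; simp at hz; subst hz; exact Equiv.Perm.SameCycle.refl _ _
      | succ j ih =>
        intro z hz
        by_cases h2 : z = g
        · subst h2; exact Equiv.Perm.SameCycle.refl _ _
        have h1 : z ≠ e := by
          rintro rfl
          exact heg ⟨((j + 1 : ℕ) : ℤ), by rw [zpow_natCast]; exact hz⟩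
        have := ih (σ z) (by rw [pow_succ] at hz; simpa using hz)
        have h3 := hstep z
        rw [τo z h1 h2] at h3
        exact h3.trans this
    have hgg : σ.SameCycle (σ g) g := Equiv.Perm.SameCycle.symm ⟨1, by simp⟩
    obtain ⟨j, _, hj⟩ := hgg.exists_pow_eq'
    have teg : τ.SameCycle e g := by
      have := hstep e
      rw [τe] at this
      exact this.trans (back j _ hj)
    have hst : ∀ z, τ.SameCycle z (σ z) := by
      intro z
      by_cases h1 : z = e
      · subst h1; have := hstep g; rw [τg] at this; exact teg.trans this
      by_cases h2 : z = g
      · subst h2; have := hstep e; rw [τe] at this; exact teg.symm.trans this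
      have := hstep z; rwa [τo z h1 h2] at this
    have hpow : ∀ (j : ℕ) z, τ.SameCycle z ((σ ^ j) z) := by
      intro j
      induction j with
      | zero => intro z; exact Equiv.Perm.SameCycle.refl _ _
      | succ j ih =>
        intro z
        rw [pow_succ]
        exact (hst z).trans (ih (σ z))
    have hall : ∀ a b, σ.SameCycle a b → τ.SameCycle a b := by
      intro a b hab
      obtain ⟨j, _, hj⟩ := hab.exists_pow_eq'
      rw [← hj]; exact hpow j a
    have hlt : (Finset.univ.filter (fun p : W × W => σ.SameCycle p.1 p.2)).card <
        (Finset.univ.filter (fun p : W × W => τ.SameCycle p.1 p.2)).card := by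
      apply Finset.card_lt_card
      rw [Finset.ssubset_iff_of_subset]
      · exact ⟨(e, g), by simpa using teg, by simpa using heg⟩
      · intro p hp
        simp only [Finset.mem_filter, Finset.mem_univ, true_and] at hp ⊢
        exact hall _ _ hp
    exact absurd (hmax τ hτF) (not_le.mpr hlt)
  intro y
  have : y ∈ {y | σ.SameCycle x y} := by rw [key]; trivial
  exact this

lemma window_closed {n k : ℕ} (P : Fin k → Bool)
    (A : Set {w : Fin n → Fin k // ClassAlternating P w})
    (hA : ∀ w ∈ A, ∀ v : {w : Fin n → Fin k // ClassAlternating P w},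
      (∀ i j : Fin n, (j : ℕ) = (i : ℕ) + 1 → w.1 j = v.1 i) → v ∈ A)
    (x : ℕ → Fin k) (m : ℕ) (hx : ∀ i, i + 1 < n + m → P (x i) ≠ P (x (i + 1)))
    (w : {w : Fin n → Fin k // ClassAlternating P w}) (hw : w ∈ A)
    (hwx : ∀ i : Fin n, w.1 i = x i) :
    ∀ v : {w : Fin n → Fin k // ClassAlternating P w}, (∀ i : Fin n, v.1 i = x (m + i)) → v ∈ A := by
  induction m with
  | zero =>
    intro v hv
    have : v = w := Subtype.ext (funext fun i => by rw [hv, hwx]; simp)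
    rwa [this]
  | succ m ih =>
    intro v hv
    have hu : ClassAlternating P (fun i : Fin n => x (m + i)) := by
      intro i j hij
      have := hx (m + i) (by omega)
      simpa [hij, add_assoc] using this
    have h1 := ih (fun i hi => hx i (by omega)) ⟨_, hu⟩ (fun i => rfl)
    refine hA _ h1 v ?_
    intro i j hij
    rw [hv]
    simp only [hij]
    congr 1; omega

lemma alt_parity {n k : ℕ} (P : Fin k → Bool) (w : Fin n → Fin k) (hw : ClassAlternating P w)
    (hn : 0 < n) : ∀ (i : ℕ) (hi : i < n),
      P (w ⟨i, hi⟩) = if Even i then P (w ⟨0, hn⟩) else !P (w ⟨0, hn⟩) := by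
  intro i
  induction i with
  | zero => intro hi; simp
  | succ i ih =>
    intro hi
    have h1 := ih (by omega)
    have h2 := hw ⟨i, by omega⟩ ⟨i + 1, hi⟩ rfl
    rw [h1] at h2
    by_cases he : Even i
    · have : ¬ Even (i + 1) := by simpa [Nat.even_add_one] using he
      simp only [he, this, if_true, if_false] at h2 ⊢
      revert h2; cases P (w ⟨0, hn⟩) <;> cases P (w ⟨i + 1, hi⟩) <;> simp
    · have : Even (i + 1) := by simpa [Nat.even_add_one] using he
      simp only [he, this, if_true, if_false] at h2 ⊢
      revert h2; cases P (w ⟨0, hn⟩) <;> cases P (w ⟨i + 1, hi⟩) <;> simp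

/-- A permutation of the letters that is the identity (n even) or swaps the classes (n odd). -/
lemma exists_letter_perm {n k kv kc : ℕ} (P : Fin k → Bool)
    (hkv : (Finset.univ.filter (fun x : Fin k => P x = true)).card = kv)
    (hkc : (Finset.univ.filter (fun x : Fin k => P x = false)).card = kc)
    (hpar : Even n ∨ (Odd n ∧ kv = kc)) :
    ∃ φ : Equiv.Perm (Fin k), ∀ a, P (φ a) = if Even n then P a else !P a := by
  rcases hpar with h | ⟨h, hh⟩
  · exact ⟨1, fun a => by simp [h]⟩
  · have hne : ¬ Even n := Nat.not_even_iff_odd.mpr h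
    have hc : Fintype.card {x : Fin k // P x = true} = Fintype.card {x : Fin k // ¬ P x = true} := by
      rw [Fintype.card_subtype, Fintype.card_subtype]
      simp only [Bool.not_eq_true]
      omega
    let e := Fintype.equivOfCardEq hc
    let E := Equiv.sumCompl (fun x : Fin k => P x = true)
    refine ⟨(E.symm.trans ((Equiv.sumComm _ _).trans (Equiv.sumCongr e.symm e))).trans E, ?_⟩
    intro a
    simp only [hne, if_false]
    obtain ⟨b, rfl⟩ := E.surjective a
    rcases b with b | b
    · have h1 := (e b).2
      have h2 := b.2
      have h3 : P (e b : Fin k) = false := by simpa using h1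
      have h4 : P (E (Sum.inl b)) = true := h2
      rw [h4]
      have h5 : P (E (Sum.inr (e b))) = false := h3
      simpa using h5
    · have h1 := (e.symm b).2
      have h2 := b.2
      have h4 : P (E (Sum.inr b)) = false := by simpa [E] using h2
      rw [h4]
      have h5 : P (E (Sum.inl (e.symm b))) = true := h1
      simpa using h5

/-- If the alphabet `Fin k` is split by `P` into `k_v ≥ 1` vowels and `k_c ≥ 1`
consonants (so `k = k_v + k_c`), and `n ≥ 2`, then a U-cycle of class-alternating
`n`-letter words exists provided `n` is even, or `n` is odd and `k_v = k_c`. -/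
theorem exists_ucycle_class_alternating (n k kv kc : ℕ) (P : Fin k → Bool)
    (hkv : (Finset.univ.filter (fun x : Fin k => P x = true)).card = kv)
    (hkc : (Finset.univ.filter (fun x : Fin k => P x = false)).card = kc)
    (hkv1 : 1 ≤ kv) (hkc1 : 1 ≤ kc) (hk : k = kv + kc) (hn : 2 ≤ n)
    (hpar : Even n ∨ (Odd n ∧ kv = kc)) :
    ∃ s : ZMod (Finset.univ.filter
        (fun w : Fin n → Fin k => ClassAlternating P w)).card → Fin k,
      IsUCycle (Finset.univ.filter (fun w : Fin n → Fin k => ClassAlternating P w)) s := by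
  classical
  have hn0 : 0 < n := by omega
  obtain ⟨φ, hφ⟩ := exists_letter_perm (n := n) P hkv hkc hpar
  let W := {w : Fin n → Fin k // ClassAlternating P w}
  let F : W → W → Prop := fun w v => ∀ i j : Fin n, (j : ℕ) = (i : ℕ) + 1 → w.1 j = v.1 i
  -- the initial permutation: rotate, applying `φ` to the first letter
  let r : W → W := fun w => ⟨fun j => if h : (j : ℕ) + 1 < n then w.1 ⟨j + 1, h⟩
      else φ (w.1 ⟨0, hn0⟩), by
    intro i j hij
    have hi : (i : ℕ) + 1 < n := by omega
    by_cases hj : (j : ℕ) + 1 < n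
    · simp only [hi, hj, dif_pos]
      exact w.2 _ _ (by simp [hij])
    · simp only [hi, hj, dif_pos, dif_neg, not_false_eq_true]
      rw [hφ, alt_parity P w.1 w.2 hn0]
      have hnn : n = i + 1 + 1 := by omega
      have hev : Even n ↔ Even ((i : ℕ) + 1 + 1) := by rw [← hnn]
      simp only [hev]
      by_cases he : Even ((i : ℕ) + 1)
      · have : ¬ Even ((i : ℕ) + 1 + 1) := by rw [Nat.even_add_one]; simpa using he
        simp [he, this]
      · have : Even ((i : ℕ) + 1 + 1) := by rw [Nat.even_add_one]; simpa using he
        simp [he, this]⟩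
  have hrF : ∀ w, F w (r w) := by
    intro w i j hij
    have hi : (i : ℕ) + 1 < n := by omega
    simp only [r, hi, dif_pos]
    exact congrArg w.1 (Fin.ext hij)
  have hrinj : Function.Injective r := by
    intro w v hwv
    have h1 : ∀ j, (r w).1 j = (r v).1 j := by rw [hwv]; simp
    apply Subtype.ext
    funext ⟨i, hi⟩
    rcases i with _ | i
    · have := h1 ⟨n - 1, by omega⟩
      have hh : ¬ (n - 1 + 1 < n) := by omega
      simp only [r, hh, dif_neg, not_false_eq_true] at this
      exact φ.injective this
    · have := h1 ⟨i, by omega⟩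
      simpa only [r, hi, dif_pos] using this
  have hrbij : Function.Bijective r := Finite.injective_iff_bijective.mp hrinj
  obtain ⟨σ, hσF, hσ⟩ := euler_perm F
    (by
      intro e g u v h1 h2 h3 i j hij
      rw [h2 i j hij, ← h1 i j hij, h3 i j hij])
    (Equiv.ofBijective r hrbij) hrF
    (by
      intro A ⟨w₀, hw₀⟩ hA
      apply Set.eq_univ_of_forall
      intro f
      have hl : n - 1 < n := by omega
      have main : ∀ w ∈ A, P (w.1 ⟨n - 1, hl⟩) ≠ P (f.1 ⟨0, hn0⟩) → f ∈ A := by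
        intro w hw hne
        refine window_closed P A hA
          (fun i => if h : i < n then w.1 ⟨i, h⟩ else if h' : i - n < n then f.1 ⟨i - n, h'⟩
            else w.1 ⟨0, hn0⟩) n ?_ w hw (by intro i; simp) f (by intro i; simp)
        intro i hi
        by_cases h1 : i + 1 < n
        · have h2 : i < n := by omega
          simp only [h1, h2, dif_pos]
          exact w.2 _ _ rfl
        · by_cases h2 : i < n
          · have h3 : i = n - 1 := by omega
            have h4 : i + 1 - n < n := by omega
            have h5 : i + 1 - n = 0 := by omega
            simp only [h1, h2, h4, dif_pos, dif_neg, not_false_eq_true]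
            simpa only [h3, h5] using (by subst h3; simpa only [h5] using hne)
          · have h3 : i - n < n := by omega
            have h4 : i + 1 - n < n := by omega
            simp only [h1, h2, h3, h4, dif_pos, dif_neg, not_false_eq_true]
            exact f.2 _ _ (by simp; omega)
      by_cases hne : P (w₀.1 ⟨n - 1, hl⟩) = P (f.1 ⟨0, hn0⟩)
      · apply main (r w₀) (hA _ hw₀ _ (hrF w₀))
        have h1 := hrF w₀ ⟨n - 2, by omega⟩ ⟨n - 1, hl⟩ (by simp; omega)
        have h2 := (r w₀).2 ⟨n - 2, by omega⟩ ⟨n - 1, hl⟩ (by simp; omega)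
        rw [← h1, hne] at h2
        exact h2.symm
      · exact main w₀ hw₀ hne)
  -- a word exists
  obtain ⟨v, hv⟩ := Finset.card_pos.mp (by omega : 0 < (Finset.univ.filter (fun x : Fin k => P x = true)).card)
  obtain ⟨c, hc⟩ := Finset.card_pos.mp (by omega : 0 < (Finset.univ.filter (fun x : Fin k => P x = false)).card)
  simp only [Finset.mem_filter, Finset.mem_univ, true_and] at hv hc
  have w₀ : W := ⟨fun i => if Even (i : ℕ) then v else c, by
    intro i j hij
    by_cases he : Even (i : ℕ)
    · have : ¬ Even (j : ℕ) := by rw [hij, Nat.even_add_one]; simpa using he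
      simp [he, this, hv, hc]
    · have : Even (j : ℕ) := by rw [hij, Nat.even_add_one]; simpa using he
      simp [he, this, hv, hc]⟩
  set S := Finset.univ.filter (fun w : Fin n → Fin k => ClassAlternating P w) with hS
  have hcard : (Finset.univ : Finset W).card = S.card := by
    rw [Finset.card_univ]; exact Fintype.card_subtype _
  have hpos : 0 < S.card := by
    rw [← hcard]; exact Finset.card_pos.mpr ⟨w₀, Finset.mem_univ _⟩
  haveI : NeZero S.card := ⟨hpos.ne'⟩
  have hcyc : σ.IsCycleOn ((Finset.univ : Finset W) : Set W) :=
    ⟨by simpa using Set.bijOn_univ.mpr σ.bijective, fun x _ y _ => hσ x y⟩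
  have hmod : ∀ a b : ℕ, (σ ^ a) w₀ = (σ ^ b) w₀ ↔ a ≡ b [MOD S.card] := by
    intro a b
    rw [← hcard]; exact hcyc.pow_apply_eq_pow_apply (Finset.mem_univ _)
  have hshift : ∀ (j : ℕ) (hj : j < n) (t : ℕ), ((σ ^ (t + j)) w₀).1 ⟨0, hn0⟩ = ((σ ^ t) w₀).1 ⟨j, hj⟩ := by
    intro j
    induction j with
    | zero => intro hj t; rfl
    | succ j ih =>
      intro hj t
      have h1 := ih (by omega) (t + 1)
      have h2 : t + (j + 1) = t + 1 + j := by omega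
      rw [h2, h1, pow_succ']
      exact (hσF _ ⟨j, by omega⟩ ⟨j + 1, hj⟩ rfl).symm
  refine ⟨fun i => ((σ ^ i.val) w₀).1 ⟨0, hn0⟩, ?_⟩
  have hwin : ∀ i : ZMod S.card, (fun j : Fin n => ((σ ^ (i + ((j : ℕ) : ZMod S.card)).val) w₀).1 ⟨0, hn0⟩)
      = ((σ ^ i.val) w₀).1 := by
    intro i
    funext j
    rw [← hshift j j.2 i.val]
    have : (σ ^ (i + ((j : ℕ) : ZMod S.card)).val) w₀ = (σ ^ (i.val + j)) w₀ := by
      rw [hmod, ← ZMod.natCast_eq_natCast_iff]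
      simp
    rw [this]
  unfold IsUCycle
  have hfun : (fun i : ZMod S.card => fun j : Fin n =>
      ((σ ^ (i + ((j : ℕ) : ZMod S.card)).val) w₀).1 ⟨0, hn0⟩)
      = fun i => ((σ ^ i.val) w₀).1 := funext hwin
  rw [hfun]
  refine ⟨?_, ?_, ?_⟩
  · intro i _
    simp only [hS, Finset.coe_filter, Finset.mem_univ, true_and, Set.mem_ofPred_eq]
    exact ((σ ^ i.val) w₀).2
  · intro a _ b _ hab
    have h1 := (hmod _ _).mp (Subtype.ext hab)
    rw [← ZMod.natCast_eq_natCast_iff] at h1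
    simpa using h1
  · intro w hw
    simp only [hS, Finset.coe_filter, Finset.mem_univ, true_and, Set.mem_ofPred_eq] at hw
    obtain ⟨t, _, ht⟩ := (hσ w₀ ⟨w, hw⟩).exists_pow_eq'
    refine ⟨(t : ZMod S.card), trivial, ?_⟩
    have : (σ ^ (t : ZMod S.card).val) w₀ = (σ ^ t) w₀ := by
      rw [hmod, ← ZMod.natCast_eq_natCast_iff]
      simp
    simp only [this, ht]
end

section
/- For every n ≥ 4 and every k ≥ 1 there exists a U-cycle for the set of non-injective words of length n over a k-letter alphabet, i.e., the set of functions from Fin n to Fin k that are not injective (n-letter words with at least one repeated letter). -/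
/-- Merging two cycles by a swap. -/
lemma uc_merge {E : Type*} [Finite E] [DecidableEq E] (σ : Equiv.Perm E) (e₀ e f : E)
    (he : σ.SameCycle e₀ e) (hf : ¬ σ.SameCycle e₀ f) :
    (∀ x, σ.SameCycle e₀ x → (σ * Equiv.swap e f).SameCycle e₀ x) ∧
      (σ * Equiv.swap e f).SameCycle e₀ f := by
  set τ := σ * Equiv.swap e f with hτ
  have key : ∀ i : ℕ, τ.SameCycle f ((σ ^ (i + 1)) e) := by
    intro i
    induction i with
    | zero =>
      refine ⟨1, ?_⟩
      simp [hτ]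
    | succ i ih =>
      by_cases h : (σ ^ (i + 1)) e = e
      · refine ⟨1, ?_⟩
        rw [pow_succ' σ (i+1), Equiv.Perm.mul_apply, h]
        simp [hτ]
      · have h2 : (σ ^ (i + 1)) e ≠ f := by
          intro h3
          apply hf
          exact he.trans ⟨(i + 1 : ℕ), by rw [zpow_natCast]; exact h3⟩
        have h4 : τ ((σ ^ (i + 1)) e) = (σ ^ (i + 1 + 1)) e := by
          rw [pow_succ' σ (i+1), hτ, Equiv.Perm.mul_apply, Equiv.Perm.mul_apply,
            Equiv.swap_apply_of_ne_of_ne h h2]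
        rw [← h4]
        exact Equiv.Perm.sameCycle_apply_right.2 ih
  have all : ∀ x, σ.SameCycle e₀ x → τ.SameCycle f x := by
    intro x hx
    have h1 : σ.SameCycle e x := he.symm.trans hx
    have h2 : σ.SameCycle e (σ.symm x) := Equiv.Perm.sameCycle_symm_apply_right.2 h1
    obtain ⟨i, hi⟩ := h2.exists_nat_pow_eq
    have := key i
    rw [pow_succ', Equiv.Perm.mul_apply, hi] at this
    simpa using this
  have h0 := all e₀ (Equiv.Perm.SameCycle.refl _ _)
  exact ⟨fun x hx => h0.symm.trans (all x hx), h0.symm⟩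

/-- Some successor permutation for which the cycle of `e₀` is closed under equal successors. -/
lemma uc_max {E : Type*} [Finite E] (Q : Equiv.Perm E → Prop) (R : E → E → Prop)
    (e₀ : E) (σ₀ : Equiv.Perm E) (h₀ : Q σ₀)
    (hswap : ∀ σ e f, Q σ → R e f → ∀ τ : Equiv.Perm E, τ e = σ f → τ f = σ e →
      (∀ x, x ≠ e → x ≠ f → τ x = σ x) → Q τ) :
    ∃ σ, Q σ ∧ ∀ e f, σ.SameCycle e₀ e → R e f → σ.SameCycle e₀ f := by
  classical
  obtain ⟨σ, hσ, hmax⟩ := Set.exists_max_image {σ | Q σ}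
    (fun σ => Set.ncard {x | σ.SameCycle e₀ x}) (Set.toFinite _) ⟨σ₀, h₀⟩
  refine ⟨σ, hσ, fun e f he hR => ?_⟩
  by_contra hf
  obtain ⟨h1, h2⟩ := uc_merge σ e₀ e f he hf
  have hq : Q (σ * Equiv.swap e f) := by
    refine hswap σ e f hσ hR _ (by simp) (by simp) ?_
    intro x hx hy
    rw [Equiv.Perm.mul_apply, Equiv.swap_apply_of_ne_of_ne hx hy]
  have h3 := hmax _ hq
  have h4 : Set.ncard {x | σ.SameCycle e₀ x} <
      Set.ncard {x | (σ * Equiv.swap e f).SameCycle e₀ x} := by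
    apply Set.ncard_lt_ncard _ (Set.toFinite _)
    refine ⟨h1, fun h => hf (h h2)⟩
  omega

/-- Connectivity of the non-injective words. -/
lemma uc_conn {m k : ℕ} (P : (Fin (m+4) → Fin k) → Prop) 
    (hup : ∀ w j x, P w → ¬ Function.Injective w → ¬ Function.Injective (Function.update w j x) →
      P (Function.update w j x)) (c₀ : Fin k) (h0 : P (fun _ => c₀))
    (w : Fin (m+4) → Fin k) (hw : ¬ Function.Injective w) : P w := by
  have upIff : ∀ w j x, ¬ Function.Injective w → ¬ Function.Injective (Function.update w j x) →
      (P (Function.update w j x) ↔ P w) := by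
    intro w j x h1 h2
    refine ⟨fun h => ?_, fun h => hup w j x h h1 h2⟩
    have := hup (Function.update w j x) j (w j) h h2 (by simpa using h1)
    simpa using this
  have toConst : ∀ (w : Fin (m+4) → Fin k) a b, a ≠ b → w a = w b →
      (P w ↔ P (fun _ => w a)) := by
    intro w a b hab h
    have key : ∀ T : Finset (Fin (m+4)), (P (fun i => if i ∈ T then w a else w i) ↔ P w) := by
      intro T
      have ninj : ∀ T : Finset (Fin (m+4)),
          ¬ Function.Injective (fun i => if i ∈ T then w a else w i) := by
        intro T hi
        apply hab
        apply hi
        simp [h]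
      induction T using Finset.induction_on with
      | empty => simp
      | insert j T hj ih =>
        refine Iff.trans ?_ ih
        have e : (fun i => if i ∈ insert j T then w a else w i) =
            Function.update (fun i => if i ∈ T then w a else w i) j (w a) := by
          funext i
          by_cases hi : i = j
          · subst hi; simp
          · simp [hi]
        rw [e]
        apply upIff _ _ _ (ninj T)
        rw [← e]
        exact ninj _
    have := key Finset.univ
    simp only [Finset.mem_univ, if_true] at this
    exact this.symm
  have consts : ∀ c d, P (fun _ => c) → P (fun _ => d) := by
    intro c d h
    let v : Fin (m+4) → Fin k := fun i => if i.val < 2 then c else d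
    have h1 := toConst v ⟨0, by omega⟩ ⟨1, by omega⟩ (by simp) (by simp [v])
    have h2 := toConst v ⟨2, by omega⟩ ⟨3, by omega⟩ (by simp) (by simp [v])
    simp [v] at h1 h2
    exact h2.1 (h1.2 h)
  simp only [Function.Injective, not_forall] at hw
  obtain ⟨a, b, hab, hne⟩ := hw
  exact (toConst w a b hne hab).2 (consts _ _ h0)

lemma uc_rot_ninj {m k : ℕ} (w : Fin (m+4) → Fin k) (t : Fin (m+4)) :
    ¬ Function.Injective (fun i => w (i + t)) ↔ ¬ Function.Injective w := by
  rw [not_iff_not]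
  exact Function.Injective.of_comp_iff' w (Equiv.addRight t).bijective

/-- A single-cycle successor permutation on non-injective words. -/
lemma uc_perm (m k : ℕ) (c₀ : Fin k) :
    ∃ σ : Equiv.Perm {w : Fin (m+4) → Fin k // ¬ Function.Injective w},
      (∀ w i, i ≠ Fin.last (m+3) → (σ w).1 i = w.1 (i + 1)) ∧
      ∃ e₀, ∀ w, σ.SameCycle e₀ w := by
  have hc : ¬ Function.Injective (fun _ : Fin (m+4) => c₀) := by
    intro h
    have := @h 0 1 rfl
    simp at this
  let σ₀ : Equiv.Perm {w : Fin (m+4) → Fin k // ¬ Function.Injective w} :=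
    { toFun := fun w => ⟨fun i => w.1 (i + 1), (uc_rot_ninj w.1 1).2 w.2⟩
      invFun := fun w => ⟨fun i => w.1 (i + (-1)), (uc_rot_ninj w.1 (-1)).2 w.2⟩
      left_inv := fun w => by ext i; simp
      right_inv := fun w => by ext i; simp }
  obtain ⟨σ, hσ, hcl⟩ := uc_max
    (fun σ : Equiv.Perm {w : Fin (m+4) → Fin k // ¬ Function.Injective w} =>
      ∀ w i, i ≠ Fin.last (m+3) → (σ w).1 i = w.1 (i + 1))
    (fun e f => ∀ i, i ≠ Fin.last (m+3) → e.1 (i + 1) = f.1 (i + 1))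
    ⟨fun _ => c₀, hc⟩ σ₀ (fun w i _ => rfl) (by
      intro σ e f hQ hR τ h1 h2 h3 w i hi
      by_cases he : w = e
      · subst he; rw [h1, hQ _ _ hi, hR i hi]
      by_cases hf : w = f
      · subst hf; rw [h2, hQ _ _ hi, hR i hi]
      rw [h3 w he hf, hQ _ _ hi])
  refine ⟨σ, hσ, ⟨fun _ => c₀, hc⟩, ?_⟩
  set e₀ : {w : Fin (m+4) → Fin k // ¬ Function.Injective w} := ⟨fun _ => c₀, hc⟩
  have step : ∀ w w' : {w : Fin (m+4) → Fin k // ¬ Function.Injective w}, σ.SameCycle e₀ w →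
      (∀ i, i ≠ Fin.last (m+3) → w'.1 i = w.1 (i + 1)) → σ.SameCycle e₀ w' := by
    intro w w' hw h
    have := hcl w (σ.symm w') hw (fun i hi => by
      rw [← hσ (σ.symm w') i hi, ← h i hi]; simp)
    exact Equiv.Perm.sameCycle_symm_apply_right.1 this
  have rot' : ∀ (w : {w : Fin (m+4) → Fin k // ¬ Function.Injective w}) (t : Fin (m+4)),
      σ.SameCycle e₀ w →
      σ.SameCycle e₀ ⟨fun i => w.1 (i + t), (uc_rot_ninj w.1 _).2 w.2⟩ := by
    intro w t hw
    induction t using Fin.induction with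
    | zero => simpa using hw
    | succ t ih =>
      refine step _ _ ih (fun i hi => ?_)
      show w.1 _ = w.1 _
      refine congrArg w.1 ?_
      rw [← Fin.coeSucc_eq_succ]
      abel
  have main := uc_conn (fun w => ∃ h : ¬ Function.Injective w, σ.SameCycle e₀ ⟨w, h⟩) (by
    rintro w j x ⟨h, hw⟩ _ h2
    refine ⟨h2, ?_⟩
    have a1 := rot' _ j hw
    have a2 := step _ ⟨fun i => Function.update w j x (i + (j + 1)), (uc_rot_ninj _ _).2 h2⟩ a1 (by
      intro i hi
      have hne : i + (j + 1) ≠ j := by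
        intro h
        apply hi
        have h5 : i + 1 = 0 := by
          have : (i + 1) + j = 0 + j := by 
            rw [zero_add]; refine Eq.trans ?_ h; abel
          exact add_right_cancel this
        have h6 : Fin.last (m+3) + 1 = 0 := Fin.last_add_one _
        exact add_right_cancel (h5.trans h6.symm)
      simp only [Function.update_of_ne hne]
      congr 1
      abel)
    have a3 := rot' _ (-(j+1)) a2
    have e : (fun i => Function.update w j x (i + -(j+1) + (j+1))) = Function.update w j x := by
      funext i; rw [neg_add_cancel_right]
    simpa only [e] using a3) c₀ ⟨hc, Equiv.Perm.SameCycle.refl _ _⟩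
  rintro ⟨w, hw⟩
  exact (main w hw).2

/-- For every `n ≥ 4` and `k ≥ 1` there exists a U-cycle for the set of non-injective
`n`-letter words over a `k`-letter alphabet (words with at least one repeated letter). -/
theorem exists_ucycle_non_injective (n k : ℕ) (hn : 4 ≤ n) (hk : 1 ≤ k) :
    ∃ s : ZMod (Finset.univ.filter
        (fun w : Fin n → Fin k => ¬ Function.Injective w)).card → Fin k,
      IsUCycle (Finset.univ.filter (fun w : Fin n → Fin k => ¬ Function.Injective w)) s := by
  obtain ⟨m, rfl⟩ := Nat.exists_eq_add_of_le' hn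
  obtain ⟨σ, hσ, e₀, hcyc⟩ := uc_perm m k ⟨0, hk⟩
  unfold IsUCycle
  set S := Finset.univ.filter (fun w : Fin (m+4) → Fin k => ¬ Function.Injective w) with hS
  have hcard : S.card =
      (Finset.univ : Finset {w : Fin (m+4) → Fin k // ¬ Function.Injective w}).card := by
    rw [Finset.card_univ, Fintype.card_subtype]
  have hpos : 0 < S.card := by rw [hcard]; exact Finset.card_pos.2 ⟨e₀, Finset.mem_univ _⟩
  haveI : NeZero S.card := ⟨hpos.ne'⟩
  have hon : σ.IsCycleOn
      ((Finset.univ : Finset {w : Fin (m+4) → Fin k // ¬ Function.Injective w}) : Set _) := by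
    refine ⟨by simpa using σ.bijective.bijOn_univ, fun x _ y _ => (hcyc x).symm.trans (hcyc y)⟩
  have hmod : ∀ a b : ℕ, (σ ^ a) e₀ = (σ ^ b) e₀ ↔ a ≡ b [MOD S.card] := by
    intro a b
    rw [hcard]
    exact hon.pow_apply_eq_pow_apply (Finset.mem_univ _)
  have hpow : ∀ (j : ℕ) (hj : j < m + 4) w, ((σ ^ j) w).1 0 = w.1 ⟨j, hj⟩ := by
    intro j
    induction j with
    | zero => intro hj w; rfl
    | succ j ih =>
      intro hj w
      rw [pow_succ, Equiv.Perm.mul_apply, ih (by omega), hσ]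
      · refine congrArg w.1 ?_
        ext
        rw [Fin.val_add_one_of_lt]
        simp [Fin.lt_def]; omega
      · simp [Fin.ext_iff]; omega
  let s : ZMod S.card → Fin k := fun i => ((σ ^ i.val) e₀).1 0
  have hs : ∀ i : ZMod S.card,
      (fun j : Fin (m+4) => s (i + ((j : ℕ) : ZMod S.card))) = ((σ ^ i.val) e₀).1 := by
    intro i
    funext j
    have : (σ ^ (i + ((j : ℕ) : ZMod S.card)).val) e₀ = (σ ^ (j.val + i.val)) e₀ := by
      rw [hmod, ← ZMod.natCast_eq_natCast_iff]
      simp [add_comm]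
    simp only [s]
    rw [this, pow_add, Equiv.Perm.mul_apply, hpow j.val j.isLt]
  refine ⟨s, ?_, ?_, ?_⟩
  · intro i _
    simp only [hs]
    simp only [hS, Finset.coe_filter, Finset.mem_univ, true_and, Set.mem_setOf_eq]
    exact ((σ ^ i.val) e₀).2
  · intro a _ b _ hab
    simp only [hs] at hab
    have := (hmod _ _).1 (Subtype.ext hab)
    rw [← ZMod.natCast_eq_natCast_iff] at this
    simpa using this
  · intro w hw
    have hw' : ¬ Function.Injective w := by simpa [hS] using hw
    obtain ⟨t, ht⟩ := (hcyc ⟨w, hw'⟩).exists_nat_pow_eq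
    refine ⟨(t : ZMod S.card), Set.mem_univ _, ?_⟩
    simp only [hs]
    have : (σ ^ (t : ZMod S.card).val) e₀ = (σ ^ t) e₀ := by
      rw [hmod, ← ZMod.natCast_eq_natCast_iff]
      simp
    rw [this, ht]
end

section
/- For every n ≥ 2 with n ≠ 3 there exists a U-cycle for the set of illegal rankings of n contestants, i.e., the set of words of length n over the alphabet {1,…,n} that are not legal rankings. -/
/-- A ranking `r : Fin n → Fin n` (value `i` represents rank `i+1`) is legal if the rank
of each contestant equals 1 plus the number of contestants with strictly smaller rank
(0-indexed: `r i = #{j | r j < r i}`). -/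
def LegalRanking {n : ℕ} (r : Fin n → Fin n) : Prop :=
  ∀ i : Fin n, (r i : ℕ) = (Finset.univ.filter (fun j : Fin n => r j < r i)).card


instance {n : ℕ} : DecidablePred (fun r : Fin n → Fin n => LegalRanking r) := fun r =>
  inferInstanceAs (Decidable (∀ i : Fin n,
    (r i : ℕ) = (Finset.univ.filter (fun j : Fin n => r j < r i)).card))

open Equiv in
/-- Cycle joining: a permutation whose classes are connected can be modified to a single cycle. -/
theorem exists_joined_cycle {S V : Type*} [Finite S] (f : Perm S) (p : S → V) (x0 : S)
    (conn : ∀ T : Set S, x0 ∈ T → (∀ x, x ∈ T ↔ f x ∈ T) →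
      (∀ x y, p x = p y → x ∈ T → y ∈ T) → ∀ x, x ∈ T) :
    ∃ g : Perm S, (∀ x, p (g x) = p (f x)) ∧ ∀ x, g.SameCycle x0 x := by
  classical
  have : Nonempty {g : Perm S // ∀ x, p (g x) = p (f x)} := ⟨⟨f, fun _ => rfl⟩⟩
  obtain ⟨⟨g, hg⟩, hmax⟩ := Finite.exists_max
    (fun g : {g : Perm S // ∀ x, p (g x) = p (f x)} => Set.ncard {x | g.1.SameCycle x0 x})
  refine ⟨g, hg, ?_⟩
  refine conn {x | g.SameCycle x0 x} (Perm.SameCycle.refl _ _) ?_ ?_ <;>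
    have key : ∀ x y, p x = p y → g.SameCycle x0 x → g.SameCycle x0 y := by
      intro x y hxy hx
      by_contra hy
      have hnxy : ¬ g.SameCycle x y := fun h => hy (hx.trans h)
      set g' : Perm S := swap x y * g with hg'
      have hp' : ∀ z, p (g' z) = p (f z) := by
        intro z
        rw [← hg z, hg', Perm.mul_apply]
        by_cases h1 : g z = x
        · rw [h1, swap_apply_left, hxy]
        · by_cases h2 : g z = y
          · rw [h2, swap_apply_right, hxy]
          · rw [swap_apply_of_ne_of_ne h1 h2]
      have hex : ∃ k : ℕ, 0 < k ∧ (g ^ k) y = y := by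
        have := Fintype.ofFinite S
        exact ⟨orderOf g, orderOf_pos g, by simp [pow_orderOf_eq_one]⟩
      obtain ⟨hk0, hk⟩ := Nat.find_spec hex
      have hmin := fun m => Nat.find_min (H := hex) (m := m)
      generalize Nat.find hex = k at hk0 hk hmin
      have hiter : ∀ i, i < k → (g' ^ i) y = (g ^ i) y := by
        intro i
        induction i with
        | zero => simp
        | succ i ih =>
          intro hi
          rw [pow_succ', Perm.mul_apply, ih (by omega), hg', Perm.mul_apply, ← Perm.mul_apply g,
            ← pow_succ']
          apply swap_apply_of_ne_of_ne
          · intro h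
            exact hnxy (Perm.SameCycle.symm ⟨(i + 1 : ℕ), by rw [zpow_natCast]; exact h⟩)
          · intro h
            exact hmin _ hi ⟨by omega, h⟩
      have hxy' : g'.SameCycle y x := by
        refine ⟨(k : ℕ), ?_⟩
        rw [zpow_natCast]
        obtain ⟨m, rfl⟩ : ∃ m, k = m + 1 := ⟨k - 1, by omega⟩
        rw [pow_succ', Perm.mul_apply, hiter m (by omega), hg', Perm.mul_apply, ← Perm.mul_apply g,
            ← pow_succ', hk, swap_apply_right]
      have hstep : ∀ a, g'.SameCycle a (g a) := by
        intro a
        have h0 : g'.SameCycle a (g' a) := Perm.sameCycle_apply_right.2 (Perm.SameCycle.refl _ _)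
        have h1 : g' a = swap x y (g a) := rfl
        rw [h1] at h0
        by_cases h1 : g a = x
        · rw [h1, swap_apply_left] at h0
          rw [h1]; exact h0.trans hxy'
        · by_cases h2 : g a = y
          · rw [h2, swap_apply_right] at h0
            rw [h2]; exact h0.trans hxy'.symm
          · rwa [swap_apply_of_ne_of_ne h1 h2] at h0
      have hpow : ∀ (i : ℕ) a, g'.SameCycle a ((g ^ i) a) := by
        intro i
        induction i with
        | zero => intro a; exact Perm.SameCycle.refl _ _
        | succ i ih =>
          intro a
          rw [pow_succ', Perm.mul_apply]
          exact (ih a).trans (hstep _)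
      have hle : ∀ a, g.SameCycle x0 a → g'.SameCycle x0 a := by
        intro a ha
        obtain ⟨i, hi⟩ := ha.exists_nat_pow_eq
        rw [← hi]; exact hpow _ _
      have := hmax ⟨g', hp'⟩
      refine absurd this (not_le.2 (Set.ncard_lt_ncard ?_ (Set.toFinite _)))
      refine ⟨hle, fun h => hy (h ?_)⟩
      exact (hle x hx).trans hxy'.symm
  · intro x
    have h1 : g.SameCycle x0 x ↔ g.SameCycle x0 (g x) := Perm.sameCycle_apply_right.symm
    show g.SameCycle x0 x ↔ g.SameCycle x0 (f x)
    rw [h1]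
    exact ⟨key _ _ (hg x), key _ _ (hg x).symm⟩
  · exact key

/-- number of letters smaller than `m` -/
def cntLt {n : ℕ} (r : Fin n → Fin n) (m : ℕ) : ℕ :=
  (Finset.univ.filter (fun j : Fin n => (r j : ℕ) < m)).card

theorem legal_iff_cntLt {n : ℕ} (r : Fin n → Fin n) :
    LegalRanking r ↔ ∀ i, (r i : ℕ) = cntLt r (r i) := Iff.rfl

theorem cntLt_lt_succ_iff {n : ℕ} (r : Fin n → Fin n) (m : ℕ) :
    cntLt r m < cntLt r (m + 1) ↔ ∃ i, (r i : ℕ) = m := by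
  constructor
  · intro h
    by_contra! hc
    refine absurd h (not_lt.2 (Finset.card_le_card ?_))
    intro j
    simp only [Finset.mem_filter, Finset.mem_univ, true_and]
    have := hc j
    omega
  · rintro ⟨i, hi⟩
    refine Finset.card_lt_card ⟨?_, ?_⟩
    · intro j
      simp only [Finset.mem_filter, Finset.mem_univ, true_and]
      omega
    · intro h
      have := @h i (by simp [hi])
      simp [hi] at this

theorem cntLt_le_succ {n : ℕ} (r : Fin n → Fin n) (m : ℕ) :
    cntLt r m ≤ cntLt r (m + 1) := by
  refine Finset.card_le_card ?_
  intro j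
  simp only [Finset.mem_filter, Finset.mem_univ, true_and]
  omega

theorem legal_gap {n : ℕ} {r : Fin n → Fin n} (hr : LegalRanking r) (m : ℕ)
    (h : cntLt r m < n) : ∃ i, (r i : ℕ) = cntLt r m := by
  have hne : (Finset.univ.filter (fun j : Fin n => m ≤ (r j : ℕ))).Nonempty := by
    by_contra hc
    rw [Finset.not_nonempty_iff_eq_empty, Finset.filter_eq_empty_iff] at hc
    have : cntLt r m = n := by
      unfold cntLt
      rw [Finset.filter_true_of_mem, Finset.card_univ, Fintype.card_fin]
      intro x _
      exact not_le.1 (hc (Finset.mem_univ x))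
    omega
  obtain ⟨i, hi, hmin⟩ := Finset.exists_min_image _ (fun j => (r j : ℕ)) hne
  simp only [Finset.mem_filter, Finset.mem_univ, true_and] at hi hmin
  refine ⟨i, ?_⟩
  rw [(legal_iff_cntLt r).1 hr i]
  unfold cntLt
  congr 1
  ext j
  simp only [Finset.mem_filter, Finset.mem_univ, true_and]
  have := hmin j
  omega

theorem cntLt_update_same {n : ℕ} (r : Fin n → Fin n) (i v : Fin n) (m : ℕ)
    (h : (r i : ℕ) < m ↔ (v : ℕ) < m) : cntLt (Function.update r i v) m = cntLt r m := by
  unfold cntLt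
  congr 1
  ext j
  simp only [Finset.mem_filter, Finset.mem_univ, true_and]
  by_cases hj : j = i
  · subst hj; simp [h]
  · simp [hj]

theorem cntLt_update_drop {n : ℕ} (r : Fin n → Fin n) (i v : Fin n) (m : ℕ)
    (h : (r i : ℕ) < m) (hv : m ≤ (v : ℕ)) :
    cntLt (Function.update r i v) m + 1 = cntLt r m := by
  have : (Finset.univ.filter (fun j : Fin n => (Function.update r i v j : ℕ) < m)) =
      (Finset.univ.filter (fun j : Fin n => (r j : ℕ) < m)).erase i := by
    ext j
    simp only [Finset.mem_filter, Finset.mem_univ, true_and, Finset.mem_erase]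
    by_cases hj : j = i
    · subst hj; simp [hv]
    · simp [hj]
  unfold cntLt
  rw [this, Finset.card_erase_add_one]
  simpa using h

theorem illegal_of_no_zero {n : ℕ} (hn : 2 ≤ n) (r : Fin n → Fin n) (h : cntLt r 1 = 0) :
    ¬ LegalRanking r := by
  intro hl
  obtain ⟨i, hi⟩ := legal_gap hl 1 (by omega)
  rw [h] at hi
  have := (cntLt_lt_succ_iff r 0).2 ⟨i, hi⟩
  simp only [zero_add] at this
  omega

theorem illegal_step {n : ℕ} (hn : 2 ≤ n) (hn3 : n ≠ 3) (r : Fin n → Fin n)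
    (hr : ¬ LegalRanking r) (htop : r ≠ fun _ => ⟨n - 1, by omega⟩) :
    ∃ i v, r i < v ∧ ¬ LegalRanking (Function.update r i v) := by
  rcases Nat.eq_zero_or_pos (cntLt r 1) with hz | hz
  · obtain ⟨i, hi⟩ := Function.ne_iff.1 htop
    have h1 : 1 ≤ (r i : ℕ) := by
      by_contra hc
      have := (cntLt_lt_succ_iff r 0).2 ⟨i, by omega⟩
      simp only [zero_add] at this
      omega
    have h2 : (r i : ℕ) ≠ n - 1 := fun h => hi (Fin.ext h)
    refine ⟨i, ⟨n - 1, by omega⟩, ?_, ?_⟩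
    · rw [Fin.lt_def]
      have := (r i).2
      simp only
      omega
    · apply illegal_of_no_zero hn
      rw [cntLt_update_same, hz]
      simp only
      omega
  have h0 : cntLt r 0 = 0 := by simp [cntLt]
  obtain ⟨i, hi⟩ := (cntLt_lt_succ_iff r 0).1 (by simp only [zero_add]; omega)
  by_cases hz1 : cntLt r 1 = 1
  · refine ⟨i, ⟨1, by omega⟩, by rw [Fin.lt_def]; simp only; omega, ?_⟩
    apply illegal_of_no_zero hn
    have := cntLt_update_drop r i ⟨1, by omega⟩ 1 (by omega) (le_refl _)
    omega
  by_cases hn2 : n = 2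
  · subst hn2
    have htop' : r ≠ fun _ => 1 := htop
    clear hz hi h0 hz1 hn3 i htop hn
    revert r
    decide
  have hself : ∀ v : Fin n, LegalRanking (Function.update r i v) →
      (v : ℕ) = cntLt (Function.update r i v) v := by
    intro v hl
    have := (legal_iff_cntLt _).1 hl i
    simpa using this
  by_cases hz3 : 3 ≤ cntLt r 1
  · refine ⟨i, ⟨1, by omega⟩, by rw [Fin.lt_def]; simp only; omega, fun hl => ?_⟩
    have h1 := hself _ hl
    have h2 := cntLt_update_drop r i ⟨1, by omega⟩ 1 (by omega) (le_refl _)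
    simp only at h1
    omega
  have h12 := cntLt_le_succ r 1
  simp only [Nat.reduceAdd] at h12
  by_cases hc3 : cntLt r 2 = 3
  · by_cases h2 : ∃ k, (r k : ℕ) = 2
    · obtain ⟨k, hk⟩ := h2
      refine ⟨i, ⟨1, by omega⟩, by rw [Fin.lt_def]; simp only; omega, fun hl => ?_⟩
      have h1 := (legal_iff_cntLt _).1 hl k
      have hki : k ≠ i := by rintro rfl; omega
      rw [Function.update_of_ne hki, hk, cntLt_update_same _ _ _ _ (by simp only; omega)] at h1
      omega
    · have h23 := cntLt_le_succ r 2
      rw [← cntLt_lt_succ_iff] at h2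
      simp only [Nat.reduceAdd] at h2 h23
      refine ⟨i, ⟨3, by omega⟩, by rw [Fin.lt_def]; simp only; omega, fun hl => ?_⟩
      have a2 := cntLt_update_drop r i ⟨3, by omega⟩ 2 (by omega) (by simp)
      have a3 := cntLt_update_drop r i ⟨3, by omega⟩ 3 (by omega) (by simp)
      obtain ⟨k, hk⟩ := legal_gap hl 2 (by omega)
      have := (cntLt_lt_succ_iff (Function.update r i ⟨3, by omega⟩) 2).2 ⟨k, by omega⟩
      simp only [Nat.reduceAdd] at this
      omega
  · refine ⟨i, ⟨2, by omega⟩, by rw [Fin.lt_def]; simp only; omega, fun hl => ?_⟩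
    have a2 := cntLt_update_drop r i ⟨2, by omega⟩ 2 (by omega) (by simp)
    have a1 := cntLt_update_drop r i ⟨2, by omega⟩ 1 (by omega) (by simp)
    have h1 := hself _ hl
    simp only at h1
    obtain ⟨k, hk⟩ := legal_gap hl 1 (by omega)
    have := (cntLt_lt_succ_iff (Function.update r i ⟨2, by omega⟩) 1).2 ⟨k, by omega⟩
    simp only [Nat.reduceAdd] at this
    omega

theorem legal_comp_equiv {n : ℕ} (r : Fin n → Fin n) (e : Fin n ≃ Fin n) :
    LegalRanking (fun j => r (e j)) ↔ LegalRanking r := by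
  have hc : ∀ m, cntLt (fun j => r (e j)) m = cntLt r m := by
    intro m
    unfold cntLt
    exact Finset.card_equiv e (by simp)
  rw [legal_iff_cntLt, legal_iff_cntLt]
  simp only [hc]
  exact ⟨fun h i => by simpa using h (e.symm i), fun h i => h (e i)⟩

/-- rotation of illegal rankings -/
def rotIllegal (n : ℕ) [NeZero n] : Equiv.Perm {r : Fin n → Fin n // ¬ LegalRanking r} where
  toFun r := ⟨fun j => r.1 (j + 1), fun h => r.2 ((legal_comp_equiv r.1 (Equiv.addRight 1)).1 h)⟩
  invFun r := ⟨fun j => r.1 (j - 1), fun h => r.2 ((legal_comp_equiv r.1 (Equiv.subRight 1)).1 h)⟩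
  left_inv r := by ext j; simp
  right_inv r := by ext j; simp

theorem rotIllegal_pow (n : ℕ) [NeZero n] (k : ℕ)
    (r : {r : Fin n → Fin n // ¬ LegalRanking r}) (j : Fin n) :
    ((rotIllegal n ^ k) r).1 j = r.1 (j + Fin.ofNat n k) := by
  induction k generalizing j with
  | zero => simp
  | succ k ih =>
    rw [pow_succ', Equiv.Perm.mul_apply]
    show ((rotIllegal n ^ k) r).1 (j + 1) = _
    rw [ih]
    refine congrArg r.1 (Fin.ext ?_)
    simp only [Fin.val_add, Fin.val_ofNat, Fin.val_one', Nat.add_mod_mod, Nat.mod_add_mod]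
    congr 1
    omega

theorem exists_illegal_cycle (n : ℕ) (hn : 2 ≤ n) (hn3 : n ≠ 3) :
    ∃ (g : Equiv.Perm {r : Fin n → Fin n // ¬ LegalRanking r})
      (x0 : {r : Fin n → Fin n // ¬ LegalRanking r}),
      (∀ x (j : ℕ) (hj : j + 1 < n), (g x).1 ⟨j, by omega⟩ = x.1 ⟨j + 1, hj⟩) ∧
        ∀ x, g.SameCycle x0 x := by
  have : NeZero n := ⟨by omega⟩
  have hx0 : ¬ LegalRanking (fun _ : Fin n => (⟨n - 1, by omega⟩ : Fin n)) := by
    apply illegal_of_no_zero hn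
    simp only [cntLt, Finset.card_eq_zero, Finset.filter_eq_empty_iff]
    intro _ _
    omega
  let last : Fin n := ⟨n - 1, by omega⟩
  obtain ⟨g, hg, hcyc⟩ := exists_joined_cycle (rotIllegal n)
    (fun x => Function.update x.1 last 0) ⟨_, hx0⟩ (by
      intro T h0 hf hp
      have hpow : ∀ (k : ℕ) x, x ∈ T ↔ (rotIllegal n ^ k) x ∈ T := by
        intro k
        induction k with
        | zero => simp
        | succ k ih =>
          intro x
          rw [pow_succ', Equiv.Perm.mul_apply, ← hf, ← ih]
      have hupd : ∀ x y : {r : Fin n → Fin n // ¬ LegalRanking r}, ∀ i,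
          (∀ j, j ≠ i → x.1 j = y.1 j) → x ∈ T → y ∈ T := by
        intro x y i hxy hx
        rw [hpow ((i : ℕ) + 1)] at hx ⊢
        refine hp _ _ ?_ hx
        funext j
        by_cases hj : j = last
        · subst hj; simp
        · simp only [Function.update_of_ne hj, rotIllegal_pow]
          apply hxy
          intro h
          apply hj
          have e : last + Fin.ofNat n ((i : ℕ) + 1) = i := by
            apply Fin.ext
            simp only [Fin.val_add, last, Fin.val_ofNat, Nat.add_mod_mod]
            have : n - 1 + ((i : ℕ) + 1) = i + n := by omega
            rw [this, Nat.add_mod_right, Nat.mod_eq_of_lt i.2]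
          exact add_right_cancel (h.trans e.symm)
      have main : ∀ r : Fin n → Fin n, ∀ hr : ¬ LegalRanking r, (⟨r, hr⟩ : Subtype _) ∈ T := by
        intro r
        induction r using WellFoundedGT.induction with
        | ind r ih =>
          intro hr
          by_cases htop : r = fun _ => ⟨n - 1, by omega⟩
          · subst htop; exact h0
          · obtain ⟨i, v, hiv, hl⟩ := illegal_step hn hn3 r hr htop
            refine hupd ⟨_, hl⟩ ⟨r, hr⟩ i ?_ (ih _ ?_ hl)
            · intro j hj
              simp [hj]
            · exact lt_update_self_iff.2 hiv
      exact fun x => main x.1 x.2)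
  refine ⟨g, _, ?_, hcyc⟩
  intro x j hj
  have := congrFun (hg x) ⟨j, by omega⟩
  have hne : (⟨j, by omega⟩ : Fin n) ≠ last := by
    intro h
    have := congrArg Fin.val h
    simp only [last] at this
    omega
  simp only [Function.update_of_ne hne] at this
  rw [this]
  show x.1 _ = x.1 _
  refine congrArg x.1 (Fin.ext ?_)
  simp only [Fin.val_add]
  rw [Fin.val_one', Nat.add_mod_mod, Nat.mod_eq_of_lt hj]

/-- For every `n ≥ 2` with `n ≠ 3` there exists a U-cycle for the set of illegal rankings
of `n` contestants. -/
theorem exists_ucycle_illegal_rankings (n : ℕ) (hn : 2 ≤ n) (hn3 : n ≠ 3) :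
    ∃ s : ZMod (Finset.univ.filter
        (fun r : Fin n → Fin n => ¬ LegalRanking r)).card → Fin n,
      IsUCycle (Finset.univ.filter (fun r : Fin n → Fin n => ¬ LegalRanking r)) s := by
  obtain ⟨g, x0, hg, hcyc⟩ := exists_illegal_cycle n hn hn3
  have hcard : Fintype.card {r : Fin n → Fin n // ¬ LegalRanking r} =
      (Finset.univ.filter (fun r : Fin n → Fin n => ¬ LegalRanking r)).card :=
    Fintype.card_subtype _
  unfold IsUCycle
  have hmem : ∀ r, r ∈ (Finset.univ.filter (fun r : Fin n → Fin n => ¬ LegalRanking r)) ↔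
    ¬ LegalRanking r := by simp
  generalize (Finset.univ.filter (fun r : Fin n → Fin n => ¬ LegalRanking r)) = S at *
  generalize hN : S.card = N at *
  have hNpos : 0 < N := by rw [← hcard]; exact Fintype.card_pos_iff.2 ⟨x0⟩
  have : NeZero N := ⟨by omega⟩
  -- the orbit has period exactly `N`
  have hper : Function.minimalPeriod g x0 = N := by
    have hP : 0 < Function.minimalPeriod g x0 := by
      apply Function.IsPeriodicPt.minimalPeriod_pos (orderOf_pos g)
      show g^[orderOf g] x0 = x0
      rw [← Equiv.Perm.coe_pow, pow_orderOf_eq_one]; rfl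
    have hb : Function.Bijective (fun i : Fin (Function.minimalPeriod g x0) => g^[i] x0) := by
      constructor
      · intro a b hab
        exact Fin.ext (Function.iterate_injOn_Iio_minimalPeriod a.2 b.2 hab)
      · intro y
        obtain ⟨i, hi⟩ := (hcyc y).exists_nat_pow_eq
        refine ⟨⟨i % Function.minimalPeriod g x0, Nat.mod_lt _ hP⟩, ?_⟩
        simp only [Function.iterate_mod_minimalPeriod_eq]
        rw [← hi, Equiv.Perm.coe_pow]
    have := Fintype.card_of_bijective hb
    rw [Fintype.card_fin] at this
    omega
  let w : ZMod N → {r : Fin n → Fin n // ¬ LegalRanking r} := fun i => g^[i.val] x0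
  have hw : ∀ k : ℕ, w (k : ZMod N) = g^[k] x0 := by
    intro k
    simp only [w, ZMod.val_natCast]
    rw [← hper, Function.iterate_mod_minimalPeriod_eq]
  have hw1 : ∀ i, w (i + 1) = g (w i) := by
    intro i
    obtain ⟨k, rfl⟩ := ZMod.natCast_zmod_surjective i
    rw [← Nat.cast_succ, hw, hw, Function.iterate_succ_apply']
  have hread : ∀ (j : ℕ) (hj : j < n) i,
      (w (i + (j : ZMod N))).1 ⟨0, by omega⟩ = (w i).1 ⟨j, hj⟩ := by
    intro j
    induction j with
    | zero => intro hj i; simp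
    | succ j ih =>
      intro hj i
      rw [← hg _ j hj, ← hw1, ← ih (by omega)]
      have e : i + ((j + 1 : ℕ) : ZMod N) = i + 1 + (j : ZMod N) := by
        push_cast
        ring
      rw [e]
  refine ⟨fun i => (w i).1 ⟨0, by omega⟩, ?_⟩
  have heq : (fun i : ZMod N => fun j : Fin n =>
      (w (i + ((j : ℕ) : ZMod N))).1 ⟨0, by omega⟩) = fun i => (w i).1 := by
    funext i j
    exact hread j j.2 i
  rw [heq]
  refine ⟨?_, ?_, ?_⟩
  · intro i _
    exact (hmem _).2 (w i).2
  · intro a _ b _ hab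
    have hab' : w a = w b := Subtype.ext hab
    apply ZMod.val_injective N
    exact Function.iterate_injOn_Iio_minimalPeriod
      (by rw [hper]; exact ZMod.val_lt a) (by rw [hper]; exact ZMod.val_lt b) hab'
  · intro r hr
    obtain ⟨i, hi⟩ := (hcyc ⟨r, (hmem _).1 hr⟩).exists_nat_pow_eq
    refine ⟨(i : ZMod N), trivial, ?_⟩
    simp only [hw]
    rw [← Equiv.Perm.coe_pow, hi]
end
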